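/- For every k ∈ ℕ the function Z_k is discrete harmonic: for all (x,y) ∈ ℝ², Z_k(x+1,y) + Z_k(x−1,y) + Z_k(x,y+1) + Z_k(x,y−1) = 4·Z_k(x,y). In particular the restriction of Z_k to ℤ² is harmonic for the discrete Laplacian (Δu)(p) := (1/4)·Σ_{s∈S} (u(p+s) − u(p)) with S := {(1,0),(-1,0),(0,1),(0,-1)}. -/

import Mathlib

open Finset

noncomputable section

/-- The generating set `S = {(1,0),(-1,0),(0,1),(0,-1)}` of ℤ². -/
def Sfin : Finset (ℤ × ℤ) := {(1,0), (-1,0), (0,1), (0,-1)}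

/-- Generalized binomial coefficient `binom(x,k) = (1/k!)·∏_{j<k}(x-j)`. -/
noncomputable def gbinom (x : ℝ) (k : ℕ) : ℝ :=
  (∏ j ∈ Finset.range k, (x - j)) / (Nat.factorial k)

/-- `F_k(x) = binom(x + (k-1)/2, k)`, a discretization of `x^k/k!`. -/
noncomputable def F (k : ℕ) (x : ℝ) : ℝ := gbinom (x + ((k : ℝ) - 1) / 2) k

/-- `Z_k(x,y) = Σ_{l=0}^k i^l F_{k-l}(x) F_l(y)`, a harmonic discretization of `z^k/k!`. -/
noncomputable def Z (k : ℕ) (x y : ℝ) : ℂ :=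
  ∑ l ∈ Finset.range (k + 1), Complex.I ^ l * (F (k - l) x : ℂ) * (F l y : ℂ)

/-- The discrete Laplacian on ℤ². -/
noncomputable def lap2 (u : ℤ × ℤ → ℂ) : ℤ × ℤ → ℂ :=
  fun x => (4 : ℂ)⁻¹ * ∑ s ∈ Sfin, (u (x + s) - u x)

lemma gbinom_pascal (x : ℝ) (k : ℕ) :
    gbinom (x + 1) (k + 1) - gbinom x (k + 1) = gbinom x k := by
  unfold gbinom
  rw [Finset.prod_range_succ' (fun j : ℕ => x + 1 - (j : ℝ)), Finset.prod_range_succ]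
  have h : ∏ j ∈ Finset.range k, (x + 1 - ((j + 1 : ℕ) : ℝ)) = ∏ j ∈ Finset.range k, (x - j) := by
    apply Finset.prod_congr rfl
    intro j _
    push_cast
    ring
  rw [h, Nat.factorial_succ]
  have h1 : (Nat.factorial k : ℝ) ≠ 0 := by exact_mod_cast Nat.factorial_ne_zero k
  have h2 : (k : ℝ) + 1 ≠ 0 := by positivity
  push_cast
  field_simp
  ring

lemma F_diff (k : ℕ) (x : ℝ) : F (k + 1) (x + 1) - F (k + 1) x = F k (x + 1 / 2) := by
  unfold F
  have := gbinom_pascal (x + (((k + 1 : ℕ) : ℝ) - 1) / 2) k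
  have e1 : x + 1 + (((k + 1 : ℕ) : ℝ) - 1) / 2 = x + (((k + 1 : ℕ) : ℝ) - 1) / 2 + 1 := by ring
  have e2 : x + 1 / 2 + ((k : ℝ) - 1) / 2 = x + (((k + 1 : ℕ) : ℝ) - 1) / 2 := by
    push_cast
    ring
  rw [e1, e2, this]

lemma F_second (k : ℕ) (x : ℝ) :
    F (k + 2) (x + 1) + F (k + 2) (x - 1) - 2 * F (k + 2) x = F k x := by
  have h1 := F_diff (k + 1) x
  have h2 := F_diff (k + 1) (x - 1)
  have h3 := F_diff k (x - 1 / 2)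
  rw [show x - 1 + 1 = x by ring, show x - 1 + 1 / 2 = x - 1 / 2 by ring] at h2
  rw [show x - 1 / 2 + 1 = x + 1 / 2 by ring, show x - 1 / 2 + 1 / 2 = x by ring] at h3
  linarith

lemma F_zero (x : ℝ) : F 0 x = 1 := by simp [F, gbinom]

lemma F_one (x : ℝ) : F 1 x = x := by simp [F, gbinom]

/-- Second difference of `F`, as a complex number. -/
def DF (k : ℕ) (x : ℝ) : ℂ := (F k (x + 1) : ℂ) + (F k (x - 1) : ℂ) - 2 * (F k x : ℂ)

lemma DF_zero (x : ℝ) : DF 0 x = 0 := by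
  simp only [DF, F_zero]
  norm_num

lemma DF_one (x : ℝ) : DF 1 x = 0 := by
  simp only [DF, F_one]
  push_cast
  ring

lemma DF_succ (k : ℕ) (x : ℝ) : DF (k + 2) x = (F k x : ℂ) := by
  rw [← F_second k x]
  simp only [DF]
  push_cast
  ring

lemma Z_lap (k : ℕ) (x y : ℝ) :
    Z k (x + 1) y + Z k (x - 1) y + Z k x (y + 1) + Z k x (y - 1) - 4 * Z k x y =
      ∑ l ∈ Finset.range (k + 1), Complex.I ^ l * DF (k - l) x * (F l y : ℂ) +
      ∑ l ∈ Finset.range (k + 1), Complex.I ^ l * (F (k - l) x : ℂ) * DF l y := by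
  simp only [Z, Finset.mul_sum, ← Finset.sum_add_distrib, ← Finset.sum_sub_distrib]
  apply Finset.sum_congr rfl
  intro l _
  simp only [DF]
  ring

lemma Z_real (k : ℕ) (x y : ℝ) :
    Z k (x + 1) y + Z k (x - 1) y + Z k x (y + 1) + Z k x (y - 1) = 4 * Z k x y := by
  rw [← sub_eq_zero, Z_lap]
  rcases k with _ | _ | m
  · simp [DF_zero]
  · simp [Finset.sum_range_succ, DF_zero, DF_one]
  · rw [Finset.sum_range_succ, Finset.sum_range_succ,
      Finset.sum_range_succ' (fun l => Complex.I ^ l * (F (m + 1 + 1 - l) x : ℂ) * DF l y),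
      Finset.sum_range_succ'
        (fun l => Complex.I ^ (l + 1) * (F (m + 1 + 1 - (l + 1)) x : ℂ) * DF (l + 1) y)]
    have a1 : m + 1 + 1 - (m + 1) = 1 := by omega
    have a2 : m + 1 + 1 - (m + 1 + 1) = 0 := by omega
    rw [a1, a2, DF_zero, DF_one]
    simp only [DF_zero, DF_one, zero_add, mul_zero, zero_mul, add_zero]
    rw [← Finset.sum_add_distrib]
    apply Finset.sum_eq_zero
    intro l hl
    have hl' : l < m + 1 := Finset.mem_range.mp hl
    have b1 : m + 1 + 1 - l = (m - l) + 2 := by omega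
    have b2 : m + 1 + 1 - (l + 1 + 1) = m - l := by omega
    rw [b1, b2, DF_succ, DF_succ, pow_succ, pow_succ]
    linear_combination Complex.I ^ l * (F (m - l) x : ℂ) * (F l y : ℂ) * Complex.I_mul_I

theorem Z_harmonic (k : ℕ) :
    (∀ x y : ℝ, Z k (x + 1) y + Z k (x - 1) y + Z k x (y + 1) + Z k x (y - 1) = 4 * Z k x y) ∧
    lap2 (fun p : ℤ × ℤ => Z k p.1 p.2) = 0 := by
  refine ⟨Z_real k, ?_⟩
  funext p
  obtain ⟨a, b⟩ := p
  have h := Z_real k a b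
  simp only [lap2, Sfin, Pi.zero_apply]
  rw [Finset.sum_insert (by decide), Finset.sum_insert (by decide),
    Finset.sum_insert (by decide), Finset.sum_singleton]
  simp only [Prod.mk_add_mk, add_zero, Int.cast_add, Int.cast_one, Int.cast_sub,
    ← sub_eq_add_neg]
  linear_combination (4 : ℂ)⁻¹ * h
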